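/- Let α ≥ 1 and let d be the Carnot–Carathéodory distance on ℝ³ induced by X₁ and X₂. For every η > 0 there exist constants c, C > 0, depending only on α and η, such that for every p = (x,y,z) ∈ ℝ³ and r > 0: (i) if |x| ≥ η r then c · r⁴ |x|^{α−1} ≤ ℒ³(B(p,r)) ≤ C · r⁴ |x|^{α−1}; (ii) if |x| ≤ η r then c · r^{α+3} ≤ ℒ³(B(p,r)) ≤ C · r^{α+3}. Here ℒ³ is the Lebesgue measure on ℝ³. -/

import Mathlib

open MeasureTheory

/-- The minimum appearing in the quasi-distance `δ`, with the conventions of the paper: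
it equals `|ζ| ^ (1/(α+1))` when `x = 0` (and it is `0` when `ζ = 0`). -/
noncomputable def ccMin (α x ζ : ℝ) : ℝ :=
  if x = 0 then |ζ| ^ (1 / (α + 1))
  else min (|ζ| ^ (1 / (α + 1))) (|ζ| ^ ((1 : ℝ) / 2) / |x| ^ ((α - 1) / 2))

/-- A horizontal curve on `[0,T]` for the vector fields `X₁ = ∂ₓ`, `X₂ = ∂_y + |x|^α ∂_z`:
a Lipschitz curve whose components have a.e. derivatives `(h₁, h₂, |x|^α h₂)` with
`h₁² + h₂² ≤ 1`. -/
def IsHorizontal (α T : ℝ) (γ : ℝ → ℝ × ℝ × ℝ) : Prop :=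
  (∃ K, LipschitzOnWith K γ (Set.Icc 0 T)) ∧
  ∃ h₁ h₂ : ℝ → ℝ, Measurable h₁ ∧ Measurable h₂ ∧
    (∀ t, (h₁ t) ^ 2 + (h₂ t) ^ 2 ≤ 1) ∧
    ∀ᵐ t ∂(volume.restrict (Set.Ioo 0 T)),
      HasDerivAt (fun s => (γ s).1) (h₁ t) t ∧
      HasDerivAt (fun s => (γ s).2.1) (h₂ t) t ∧
      HasDerivAt (fun s => (γ s).2.2) (|(γ t).1| ^ α * h₂ t) t

/-- The Carnot–Carathéodory distance associated with `X₁, X₂`. -/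
noncomputable def ccDist (α : ℝ) (p q : ℝ × ℝ × ℝ) : ℝ :=
  sInf {T : ℝ | 0 < T ∧ ∃ γ : ℝ → ℝ × ℝ × ℝ, IsHorizontal α T γ ∧ γ 0 = p ∧ γ T = q}

/-- The Carnot–Carathéodory ball. -/
def ccBall (α : ℝ) (p : ℝ × ℝ × ℝ) (r : ℝ) : Set (ℝ × ℝ × ℝ) :=
  {q | ccDist α p q < r}

/-- The algebraic quasi-distance `δ`. -/
noncomputable def deltaDist (α : ℝ) (p q : ℝ × ℝ × ℝ) : ℝ :=
  |q.1 - p.1| + |q.2.1 - p.2.1| +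
    ccMin α p.1 (p.2.2 - q.2.2 + |p.1| ^ α * (q.2.1 - p.2.1))

/-- The perimeter measure `μ = |x|^α ℒ²` on the plane `z = 0`, identified with `ℝ²`. -/
noncomputable def planeMeasure (α : ℝ) : Measure (ℝ × ℝ) :=
  volume.withDensity (fun u => ENNReal.ofReal (|u.1| ^ α))

open Set

/-! The proof is a ball-box estimate for every `α > 0`. Around `p = (x, y, z)`, measure heights with
the shear `z' - z - |x| ^ α (y' - y)`. A horizontal curve of length `r` stays in the strip of
half-width `r` around `x`, where `|x| ^ α` oscillates by at most a constant times
`ω = r (|x| + r) ^ (α - 1)`; hence its sheared height is at most of order `ω r`. Conversely, moving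
along `X₂` on the two rails at `x` and at distance of order `r` from `x`, where the weight is
larger by order `ω`, reaches every sheared height up to order `ω r`. So the ball is comparable to a
sheared box of volume `r ^ 4 (|x| + r) ^ (α - 1)`, and `|x| + r` is comparable to `|x|` or to `r`
in the two regimes. -/

section Rpow

variable {α β a b t T K : ℝ}

lemma min_mul_one_sub_le_one_sub_rpow (hα : 0 ≤ α) (ht₀ : 0 ≤ t) (ht₁ : t ≤ 1) :
    min α 1 * (1 - t) ≤ 1 - t ^ α := by
  rcases le_total α 1 with h | h
  · have := rpow_one_add_le_one_add_mul_self (s := t - 1) (by linarith) hα h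
    rw [add_sub_cancel] at this
    rw [min_eq_left h]
    linarith
  · have := Real.rpow_le_self_of_le_one ht₀ ht₁ h
    rw [min_eq_right h]
    linarith

lemma one_sub_rpow_le_max_mul_one_sub (ht₀ : 0 ≤ t) (ht₁ : t ≤ 1) :
    1 - t ^ α ≤ max α 1 * (1 - t) := by
  rcases le_total α 1 with h | h
  · have := Real.self_le_rpow_of_le_one ht₀ ht₁ h
    rw [max_eq_right h]
    linarith
  · have := one_add_mul_self_le_rpow_one_add (s := t - 1) (by linarith) h
    rw [add_sub_cancel] at this
    rw [max_eq_left h]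
    linarith

lemma rpow_sub_rpow_eq_mul (ha : 0 < a) (hb : 0 ≤ b) :
    a ^ α - b ^ α = a ^ α * (1 - (b / a) ^ α) := by
  rw [Real.div_rpow hb ha.le]
  field_simp

lemma sub_mul_rpow_sub_one_eq (ha : 0 < a) : (a - b) * a ^ (α - 1) = a ^ α * (1 - b / a) := by
  rw [Real.rpow_sub_one ha.ne']
  field_simp

lemma min_mul_sub_mul_rpow_le_rpow_sub_rpow (hα : 0 ≤ α) (ha : 0 < a) (hb : 0 ≤ b) (hba : b ≤ a) :
    min α 1 * ((a - b) * a ^ (α - 1)) ≤ a ^ α - b ^ α := by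
  rw [rpow_sub_rpow_eq_mul ha hb, sub_mul_rpow_sub_one_eq ha, mul_left_comm]
  gcongr
  exact min_mul_one_sub_le_one_sub_rpow hα (by positivity) (div_le_one_of_le₀ hba ha.le)

lemma rpow_sub_rpow_le_max_mul_sub_mul_rpow (ha : 0 < a) (hb : 0 ≤ b) (hba : b ≤ a) :
    a ^ α - b ^ α ≤ max α 1 * ((a - b) * a ^ (α - 1)) := by
  rw [rpow_sub_rpow_eq_mul ha hb, sub_mul_rpow_sub_one_eq ha, mul_left_comm]
  gcongr
  exact one_sub_rpow_le_max_mul_one_sub (by positivity) (div_le_one_of_le₀ hba ha.le)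

-- Comparing both powers with the top point `a + T` treats `α ≤ 1` and `1 ≤ α` alike.
lemma abs_rpow_sub_rpow_le (hα : 0 ≤ α) (hT : 0 < T) (ha : 0 ≤ a) (hb : 0 ≤ b)
    (hab : |b - a| ≤ T) :
    |b ^ α - a ^ α| ≤ 2 * max α 1 * T * (a + T) ^ (α - 1) := by
  have bounds : ∀ c, 0 ≤ c → |c - a| ≤ T →
      c ^ α ≤ (a + T) ^ α ∧
        (a + T) ^ α - c ^ α ≤ 2 * max α 1 * T * (a + T) ^ (α - 1) := by
    intro c hc hca
    obtain ⟨hlo, hhi⟩ := abs_le.1 hca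
    have hcT : c ≤ a + T := by linarith
    refine ⟨Real.rpow_le_rpow hc hcT hα, ?_⟩
    calc (a + T) ^ α - c ^ α
        ≤ max α 1 * ((a + T - c) * (a + T) ^ (α - 1)) :=
          rpow_sub_rpow_le_max_mul_sub_mul_rpow (by linarith) hc hcT
      _ ≤ max α 1 * ((2 * T) * (a + T) ^ (α - 1)) := by gcongr; linarith
      _ = 2 * max α 1 * T * (a + T) ^ (α - 1) := by ring
  obtain ⟨hb₁, hb₂⟩ := bounds b hb hab
  obtain ⟨ha₁, ha₂⟩ := bounds a ha (by simpa using hT.le)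
  exact abs_le.2 ⟨by linarith, by linarith⟩

lemma rpow_le_rpow_abs_mul_rpow (ha : 0 < a) (hb : 0 < b) (hab : a ≤ K * b) (hba : b ≤ K * a) :
    a ^ β ≤ K ^ |β| * b ^ β := by
  have hK : 0 < K := pos_of_mul_pos_left (hb.trans_le hba) ha.le
  rcases le_total 0 β with h | h
  · calc a ^ β ≤ (K * b) ^ β := Real.rpow_le_rpow ha.le hab h
      _ = K ^ |β| * b ^ β := by rw [Real.mul_rpow hK.le hb.le, abs_of_nonneg h]
  · calc a ^ β ≤ (b / K) ^ β :=
          Real.rpow_le_rpow_of_nonpos (by positivity) ((div_le_iff₀' hK).2 hba) h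
      _ = K ^ |β| * b ^ β := by
          rw [Real.div_rpow hb.le hK.le, abs_of_nonpos h, Real.rpow_neg hK.le]
          field_simp

end Rpow

lemma exists_abs_eq_abs_add (x : ℝ) {t : ℝ} (ht : 0 ≤ t) :
    ∃ x₁ : ℝ, |x₁| = |x| + t ∧ |x₁ - x| = t := by
  rcases le_total 0 x with h | h
  · exact ⟨x + t, by rw [abs_of_nonneg h, abs_of_nonneg (by linarith)], by simpa using ht⟩
  · refine ⟨x - t, ?_, by simpa using ht⟩
    rw [abs_of_nonpos h, abs_of_nonpos (by linarith)]
    ring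

lemma lipschitzOnWith_Icc_of_Icc_of_Icc {E : Type*} [PseudoMetricSpace E] {f : ℝ → E}
    {K : NNReal} {a b c : ℝ} (hab : LipschitzOnWith K f (Icc a b))
    (hbc : LipschitzOnWith K f (Icc b c)) : LipschitzOnWith K f (Icc a c) := by
  have ordered : ∀ s ∈ Icc a c, ∀ t ∈ Icc a c, s ≤ t → dist (f s) (f t) ≤ K * dist s t := by
    intro s hs t ht hst
    rcases le_total t b with htb | hbt
    · exact hab.dist_le_mul s ⟨hs.1, hst.trans htb⟩ t ⟨ht.1, htb⟩
    rcases le_total b s with hbs | hsb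
    · exact hbc.dist_le_mul s ⟨hbs, hs.2⟩ t ⟨hbt, ht.2⟩
    calc dist (f s) (f t) ≤ dist (f s) (f b) + dist (f b) (f t) := dist_triangle ..
      _ ≤ K * dist s b + K * dist b t :=
        add_le_add (hab.dist_le_mul s ⟨hs.1, hsb⟩ b ⟨hs.1.trans hsb, le_rfl⟩)
          (hbc.dist_le_mul b ⟨le_rfl, hbt.trans ht.2⟩ t ⟨hbt, ht.2⟩)
      _ = K * dist s t := by
        simp only [Real.dist_eq, abs_of_nonpos (sub_nonpos.2 hsb), abs_of_nonpos (sub_nonpos.2 hbt),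
          abs_of_nonpos (sub_nonpos.2 hst)]
        ring
  refine LipschitzOnWith.of_dist_le_mul fun s hs t ht => ?_
  rcases le_total s t with h | h
  · exact ordered s hs t ht h
  · simpa only [dist_comm] using ordered t ht s hs h

section Concatenation

variable {E : Type*} {S t d : ℝ} {γ δ : ℝ → E} {F : E → ℝ}

/-- Concatenation of two curves: follow `γ` up to time `S`, and then `δ` started at time `0`. -/
noncomputable def concatCurve (S : ℝ) (γ δ : ℝ → E) (t : ℝ) : E :=
  if t ≤ S then γ t else δ (t - S)

lemma concatCurve_of_le (h : t ≤ S) : concatCurve S γ δ t = γ t := if_pos h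

lemma concatCurve_of_lt (h : S < t) : concatCurve S γ δ t = δ (t - S) := if_neg h.not_ge

lemma concatCurve_of_ge (hγδ : γ S = δ 0) (h : S ≤ t) : concatCurve S γ δ t = δ (t - S) := by
  rcases h.eq_or_lt with rfl | h
  · simpa [concatCurve_of_le] using hγδ
  · exact concatCurve_of_lt h

lemma hasDerivAt_comp_concatCurve_of_lt_left (h : t < S) (hγ : HasDerivAt (fun s => F (γ s)) d t) :
    HasDerivAt (fun s => F (concatCurve S γ δ s)) d t := by
  refine hγ.congr_of_eventuallyEq ?_
  filter_upwards [Iio_mem_nhds h] with s hs using by rw [concatCurve_of_le (le_of_lt hs)]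

lemma hasDerivAt_comp_concatCurve_of_lt_right (h : S < t)
    (hδ : HasDerivAt (fun s => F (δ s)) d (t - S)) :
    HasDerivAt (fun s => F (concatCurve S γ δ s)) d t := by
  refine (hδ.comp_sub_const t S).congr_of_eventuallyEq ?_
  filter_upwards [Ioi_mem_nhds h] with s hs using by rw [concatCurve_of_lt hs]

lemma measurable_concatCurve [MeasurableSpace E] (hγ : Measurable γ) (hδ : Measurable δ) :
    Measurable (concatCurve S γ δ) :=
  hγ.ite measurableSet_Iic (hδ.comp (measurable_id.sub_const S))

lemma lipschitzOnWith_concatCurve [PseudoMetricSpace E] {K L : NNReal} {T : ℝ}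
    (hγ : LipschitzOnWith K γ (Icc 0 S)) (hδ : LipschitzOnWith L δ (Icc 0 T)) (hγδ : γ S = δ 0) :
    LipschitzOnWith (max K L) (concatCurve S γ δ) (Icc 0 (S + T)) := by
  refine lipschitzOnWith_Icc_of_Icc_of_Icc (b := S) (fun s hs t ht => ?_) fun s hs t ht => ?_
  · simpa only [concatCurve_of_le hs.2, concatCurve_of_le ht.2] using
      hγ.weaken (le_max_left K L) hs ht
  · have shift_mem : ∀ u ∈ Icc S (S + T), u - S ∈ Icc 0 T := fun u hu =>
      ⟨sub_nonneg.2 hu.1, by linarith [hu.2]⟩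
    simpa only [concatCurve_of_ge hγδ hs.1, concatCurve_of_ge hγδ ht.1, edist_sub_right] using
      hδ.weaken (le_max_right K L) (shift_mem s hs) (shift_mem t ht)

end Concatenation

lemma abs_sub_le_of_ae_abs_deriv_le {f : ℝ → ℝ} {a b M : ℝ}
    (hf : AbsolutelyContinuousOnInterval f a b)
    (hM : ∀ᵐ t, t ∈ uIoc a b → |deriv f t| ≤ M) :
    |f b - f a| ≤ M * |b - a| := by
  rw [← hf.integral_deriv_eq_sub]
  exact intervalIntegral.norm_integral_le_of_norm_le_const_ae (f := deriv f) hM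

namespace IsHorizontal

variable {α S T k M : ℝ} {γ δ : ℝ → ℝ × ℝ × ℝ}

lemma affine {a b : ℝ} (p : ℝ × ℝ × ℝ) (hab : a ^ 2 + b ^ 2 ≤ 1) (h : a = 0 ∨ b = 0) :
    IsHorizontal α T fun t => (p.1 + t * a, p.2.1 + t * b, p.2.2 + t * (|p.1| ^ α * b)) := by
  have hasDerivAt_line : ∀ c d t : ℝ, HasDerivAt (fun s : ℝ => c + s * d) d t := fun c d t => by
    simpa using ((hasDerivAt_id t).mul_const d).const_add c
  refine ⟨?_, fun _ => a, fun _ => b, measurable_const, measurable_const, fun _ => hab,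
    .of_forall fun t => ⟨hasDerivAt_line .., hasDerivAt_line .., ?_⟩⟩
  · have smooth : ContDiff ℝ 1 fun t : ℝ =>
        (p.1 + t * a, p.2.1 + t * b, p.2.2 + t * (|p.1| ^ α * b)) := by fun_prop
    exact smooth.contDiffOn.exists_lipschitzOnWith one_ne_zero (convex_Icc _ _) isCompact_Icc
  · rcases h with rfl | rfl
    · simpa using hasDerivAt_line p.2.2 (|p.1| ^ α * b) t
    · simpa using hasDerivAt_line p.2.2 0 t

lemma concat (hγ : IsHorizontal α S γ) (hδ : IsHorizontal α T δ) (hγδ : γ S = δ 0) :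
    IsHorizontal α (S + T) (concatCurve S γ δ) := by
  obtain ⟨⟨K, hK⟩, a, b, ha, hb, hab, hγ⟩ := hγ
  obtain ⟨⟨L, hL⟩, a', b', ha', hb', hab', hδ⟩ := hδ
  refine ⟨⟨_, lipschitzOnWith_concatCurve hK hL hγδ⟩, concatCurve S a a', concatCurve S b b',
    measurable_concatCurve ha ha', measurable_concatCurve hb hb', fun t => ?_, ?_⟩
  · unfold concatCurve
    split_ifs
    exacts [hab t, hab' (t - S)]
  rw [ae_restrict_iff' measurableSet_Ioo] at hγ hδ ⊢
  have hδ_shift := (measurePreserving_sub_right volume S).quasiMeasurePreserving.ae hδ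
  filter_upwards [hγ, hδ_shift, Measure.ae_ne volume S] with t hγt hδt hne ht
  rcases hne.lt_or_gt with h | h
  · simp only [concatCurve_of_le h.le]
    obtain ⟨hx, hy, hz⟩ := hγt ⟨ht.1, h⟩
    exact ⟨hasDerivAt_comp_concatCurve_of_lt_left h hx,
      hasDerivAt_comp_concatCurve_of_lt_left (F := fun q : ℝ × ℝ × ℝ => q.2.1) h hy,
      hasDerivAt_comp_concatCurve_of_lt_left (F := fun q : ℝ × ℝ × ℝ => q.2.2) h hz⟩
  · simp only [concatCurve_of_lt h]
    obtain ⟨hx, hy, hz⟩ := hδt ⟨sub_pos.2 h, by linarith [ht.2]⟩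
    exact ⟨hasDerivAt_comp_concatCurve_of_lt_right h hx,
      hasDerivAt_comp_concatCurve_of_lt_right (F := fun q : ℝ × ℝ × ℝ => q.2.1) h hy,
      hasDerivAt_comp_concatCurve_of_lt_right (F := fun q : ℝ × ℝ × ℝ => q.2.2) h hz⟩

lemma mono (h : IsHorizontal α T γ) (hST : S ≤ T) : IsHorizontal α S γ := by
  obtain ⟨⟨K, hK⟩, a, b, ha, hb, hab, hγ⟩ := h
  exact ⟨⟨K, hK.mono (Icc_subset_Icc_right hST)⟩, a, b, ha, hb, hab,
    ae_restrict_of_ae_restrict_of_subset (Ioo_subset_Ioo_right hST) hγ⟩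

lemma absolutelyContinuousOnInterval_comp (h : IsHorizontal α T γ) (hT : 0 ≤ T)
    {F : ℝ × ℝ × ℝ → ℝ} {L : NNReal} (hF : LipschitzWith L F) :
    AbsolutelyContinuousOnInterval (fun t => F (γ t)) 0 T := by
  obtain ⟨⟨K, hK⟩, -⟩ := h
  rw [← uIcc_of_le hT] at hK
  exact (hF.comp_lipschitzOnWith hK).absolutelyContinuousOnInterval

lemma ae_hasDerivAt (h : IsHorizontal α T γ) (hT : 0 ≤ T) :
    ∀ᵐ t, t ∈ uIoc 0 T → t ∈ Ioo 0 T ∧ ∃ a b : ℝ, |a| ≤ 1 ∧ |b| ≤ 1 ∧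
      HasDerivAt (fun s => (γ s).1) a t ∧ HasDerivAt (fun s => (γ s).2.1) b t ∧
      HasDerivAt (fun s => (γ s).2.2) (|(γ t).1| ^ α * b) t := by
  obtain ⟨-, a, b, -, -, hab, hγ⟩ := h
  rw [ae_restrict_iff' measurableSet_Ioo] at hγ
  filter_upwards [hγ, Measure.ae_ne volume T] with t hγt hne ht
  rw [uIoc_of_le hT] at ht
  have ht' : t ∈ Ioo 0 T := ⟨ht.1, ht.2.lt_of_ne hne⟩
  exact ⟨ht', a t, b t,
    (sq_le_one_iff_abs_le_one _).1 (by linarith [hab t, sq_nonneg (b t)]),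
    (sq_le_one_iff_abs_le_one _).1 (by linarith [hab t, sq_nonneg (a t)]), hγt ht'⟩

lemma abs_fst_sub_le (h : IsHorizontal α T γ) (hT : 0 ≤ T) : |(γ T).1 - (γ 0).1| ≤ T := by
  have := abs_sub_le_of_ae_abs_deriv_le (M := 1)
    (h.absolutelyContinuousOnInterval_comp hT LipschitzWith.prod_fst) (by
      filter_upwards [h.ae_hasDerivAt hT] with t ht htT
      obtain ⟨-, a, b, ha, -, hx, -⟩ := ht htT
      rwa [hx.deriv])
  simpa [abs_of_nonneg hT] using this

lemma abs_snd_fst_sub_le (h : IsHorizontal α T γ) (hT : 0 ≤ T) :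
    |(γ T).2.1 - (γ 0).2.1| ≤ T := by
  have := abs_sub_le_of_ae_abs_deriv_le (M := 1)
    (h.absolutelyContinuousOnInterval_comp hT (LipschitzWith.prod_fst.comp LipschitzWith.prod_snd))
    (by
      filter_upwards [h.ae_hasDerivAt hT] with t ht htT
      obtain ⟨-, a, b, -, hb, -, hy, -⟩ := ht htT
      exact hy.deriv.symm ▸ hb)
  simpa [abs_of_nonneg hT] using this

lemma abs_sheared_height_le (h : IsHorizontal α T γ) (hT : 0 ≤ T)
    (hM : ∀ t ∈ Ioo 0 T, |(|(γ t).1| ^ α - k)| ≤ M) :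
    |(γ T).2.2 - (γ 0).2.2 - k * ((γ T).2.1 - (γ 0).2.1)| ≤ M * T := by
  have hy := h.absolutelyContinuousOnInterval_comp hT
    (LipschitzWith.prod_fst.comp LipschitzWith.prod_snd)
  have hz := h.absolutelyContinuousOnInterval_comp hT
    (LipschitzWith.prod_snd.comp LipschitzWith.prod_snd)
  have := abs_sub_le_of_ae_abs_deriv_le (M := M) (hz.fun_sub (hy.const_mul k)) (by
    filter_upwards [h.ae_hasDerivAt hT] with t ht htT
    obtain ⟨ht', a, b, -, hb, -, hy', hz'⟩ := ht htT
    have height_deriv : deriv (fun s => (γ s).2.2 - k * (γ s).2.1) t = (|(γ t).1| ^ α - k) * b := by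
      rw [(hz'.fun_sub (hy'.const_mul k)).deriv, sub_mul]
    calc |deriv (fun s => (γ s).2.2 - k * (γ s).2.1) t| = |(|(γ t).1| ^ α - k)| * |b| := by
          rw [height_deriv, abs_mul]
      _ ≤ M * 1 := by gcongr; exacts [(abs_nonneg _).trans (hM t ht'), hM t ht']
      _ = M := mul_one M)
  simp only [Function.comp_apply, sub_zero, abs_of_nonneg hT] at this
  convert this using 2
  ring

end IsHorizontal

lemma div_sq_le_one_of_abs_le {d T : ℝ} (hT : 0 < T) (h : |d| ≤ T) : (d / T) ^ 2 ≤ 1 :=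
  (sq_le_one_iff_abs_le_one _).2 (by rwa [abs_div, abs_of_pos hT, div_le_one hT])

/-- `q` can be joined to `p` by a horizontal curve on `[0, T]`, with `T > 0`: the times over which
`ccDist` takes its infimum. -/
def IsReachable (α T : ℝ) (p q : ℝ × ℝ × ℝ) : Prop :=
  0 < T ∧ ∃ γ : ℝ → ℝ × ℝ × ℝ, IsHorizontal α T γ ∧ γ 0 = p ∧ γ T = q

namespace IsReachable

variable {α S T x x' y z d : ℝ} {p q o : ℝ × ℝ × ℝ}

lemma trans (hpq : IsReachable α S p q) (hqo : IsReachable α T q o) :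
    IsReachable α (S + T) p o := by
  obtain ⟨hS, γ, hγ, hγ₀, hγS⟩ := hpq
  obtain ⟨hT, δ, hδ, hδ₀, hδT⟩ := hqo
  have hγδ : γ S = δ 0 := hγS.trans hδ₀.symm
  refine ⟨add_pos hS hT, _, hγ.concat hδ hγδ, ?_, ?_⟩
  · rw [concatCurve_of_le hS.le, hγ₀]
  · rw [concatCurve_of_lt (lt_add_of_pos_right S hT), add_sub_cancel_left, hδT]

lemma of_affine {a b : ℝ} (hT : 0 < T) (hab : a ^ 2 + b ^ 2 ≤ 1) (h : a = 0 ∨ b = 0) :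
    IsReachable α T p (p.1 + T * a, p.2.1 + T * b, p.2.2 + T * (|p.1| ^ α * b)) :=
  ⟨hT, _, .affine p hab h, by simp, rfl⟩

lemma move_fst (hT : 0 < T) (h : |x' - x| ≤ T) : IsReachable α T (x, y, z) (x', y, z) := by
  have := of_affine (α := α) (p := (x, y, z)) (b := 0) hT
    (by simpa using div_sq_le_one_of_abs_le hT h) (.inr rfl)
  simpa [mul_div_cancel₀ _ hT.ne'] using this

lemma move_along_rail (hT : 0 < T) (h : |d| ≤ T) :
    IsReachable α T (x, y, z) (x, y + d, z + |x| ^ α * d) := by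
  have := of_affine (α := α) (p := (x, y, z)) (a := 0) hT
    (by simpa using div_sq_le_one_of_abs_le hT h) (.inl rfl)
  simpa [mul_div_cancel₀ _ hT.ne', mul_left_comm T] using this

-- Only the displacement `v` along the rail `x₁` changes the height sheared at the rail of `p`.
lemma of_two_rails {x₁ v : ℝ} (hT : 0 < T) (hx₁ : |x₁ - p.1| ≤ T) (hq : |q.1 - x₁| ≤ T)
    (hu : |q.2.1 - p.2.1 - v| ≤ T) (hv : |v| ≤ T)
    (height : q.2.2 - p.2.2 - |p.1| ^ α * (q.2.1 - p.2.1) = (|x₁| ^ α - |p.1| ^ α) * v) :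
    IsReachable α (4 * T) p q := by
  obtain ⟨x, y, z⟩ := p
  obtain ⟨x', y', z'⟩ := q
  simp only at hx₁ hq hu height
  have path := (((move_along_rail (α := α) (x := x) (y := y) (z := z) hT hu).trans
    (move_fst hT hx₁)).trans (move_along_rail hT hv)).trans (move_fst hT hq)
  convert path using 2
  · ring
  · congr 1
    · ring
    · linear_combination height

lemma exists_time (hα : 0 < α) (p q : ℝ × ℝ × ℝ) : ∃ T, IsReachable α T p q := by
  obtain ⟨x₁, hx₁, -⟩ := exists_abs_eq_abs_add p.1 zero_le_one
  have gap_pos : 0 < |x₁| ^ α - |p.1| ^ α :=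
    sub_pos.2 (Real.rpow_lt_rpow (abs_nonneg _) (by linarith) hα)
  obtain ⟨v, hv⟩ : ∃ v, q.2.2 - p.2.2 - |p.1| ^ α * (q.2.1 - p.2.1) =
      (|x₁| ^ α - |p.1| ^ α) * v := ⟨_, (mul_div_cancel₀ _ gap_pos.ne').symm⟩
  have h₁ := abs_nonneg (x₁ - p.1)
  have h₂ := abs_nonneg (q.1 - x₁)
  have h₃ := abs_nonneg (q.2.1 - p.2.1 - v)
  have h₄ := abs_nonneg v
  exact ⟨_, of_two_rails
    (T := |x₁ - p.1| + |q.1 - x₁| + |q.2.1 - p.2.1 - v| + |v| + 1)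
    (by linarith) (by linarith) (by linarith) (by linarith) (by linarith) hv⟩

lemma mem_ccBall {r : ℝ} (h : IsReachable α T p q) (hr : T < r) : q ∈ ccBall α p r := by
  have : ccDist α p q ≤ T := csInf_le ⟨0, fun _ hS => hS.1.le⟩ h
  exact this.trans_lt hr

end IsReachable

-- Connectivity matters here: with no joining curve, `ccDist` would be `sInf ∅ = 0`.
lemma exists_isReachable_of_mem_ccBall {α r : ℝ} {p q : ℝ × ℝ × ℝ} (hα : 0 < α)
    (hq : q ∈ ccBall α p r) : ∃ T < r, IsReachable α T p q := by
  obtain ⟨T, hT, hTr⟩ := exists_lt_of_csInf_lt (IsReachable.exists_time hα p q) hq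
  exact ⟨T, hTr, hT⟩

/-- The box with centre `p`, half-widths `a` in `x` and `y`, and half-height `b` measured from the
plane of slope `k` in the direction of `y`. -/
def shearedBox (p : ℝ × ℝ × ℝ) (k a b : ℝ) : Set (ℝ × ℝ × ℝ) :=
  {q | |q.1 - p.1| ≤ a ∧ |q.2.1 - p.2.1| ≤ a ∧ |q.2.2 - p.2.2 - k * (q.2.1 - p.2.1)| ≤ b}

lemma measurePreserving_shear (k : ℝ) :
    MeasurePreserving (fun u : ℝ × ℝ => (u.1, u.2 - k * u.1)) volume volume := by
  refine MeasurePreserving.skew_product (g := fun y z => z - k * y) (.id volume) ?_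
    (.of_forall fun y => (measurePreserving_sub_right volume (k * y)).map_eq)
  unfold Function.uncurry
  fun_prop

lemma volume_shearedBox (p : ℝ × ℝ × ℝ) (k b : ℝ) {a : ℝ} (ha : 0 ≤ a) :
    volume (shearedBox p k a b) = ENNReal.ofReal (8 * a ^ 2 * b) := by
  have translate := (measurePreserving_sub_right volume p.1).prod
    ((measurePreserving_sub_right volume p.2.1).prod (measurePreserving_sub_right volume p.2.2))
  have straighten : MeasurePreserving (Prod.map id (fun u : ℝ × ℝ => (u.1, u.2 - k * u.1)) ∘
      Prod.map (· - p.1) (Prod.map (· - p.2.1) (· - p.2.2)))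
      (volume : Measure (ℝ × ℝ × ℝ)) volume :=
    ((MeasurePreserving.id volume).prod (measurePreserving_shear k)).comp translate
  have preimage : shearedBox p k a b = (Prod.map id (fun u : ℝ × ℝ => (u.1, u.2 - k * u.1)) ∘
      Prod.map (· - p.1) (Prod.map (· - p.2.1) (· - p.2.2))) ⁻¹'
        (Icc (-a) a ×ˢ Icc (-a) a ×ˢ Icc (-b) b) :=
    Set.ext fun q => by simp only [shearedBox, abs_le]; rfl
  rw [preimage, straighten.measure_preimage (by measurability)]
  simp only [Measure.volume_eq_prod, Measure.prod_prod, Real.volume_Icc]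
  rw [← ENNReal.ofReal_mul (by linarith), ← ENNReal.ofReal_mul (by linarith)]
  congr 1
  ring

section BallBox

variable {α r : ℝ}

lemma ccBall_subset_shearedBox (hα : 0 < α) (p : ℝ × ℝ × ℝ) :
    ccBall α p r ⊆
      shearedBox p (|p.1| ^ α) r (2 * max α 1 * r * (|p.1| + r) ^ (α - 1) * r) := by
  intro q hq
  obtain ⟨T, hTr, hT, γ, hγ, rfl, rfl⟩ := exists_isReachable_of_mem_ccBall hα hq
  have hr : 0 < r := hT.trans hTr
  have oscillation : ∀ t ∈ Ioo 0 T, |(|(γ t).1| ^ α - |(γ 0).1| ^ α)| ≤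
      2 * max α 1 * r * (|(γ 0).1| + r) ^ (α - 1) := fun t ht =>
    abs_rpow_sub_rpow_le hα.le hr (abs_nonneg _) (abs_nonneg _) <|
      calc |(|(γ t).1| - |(γ 0).1|)| ≤ |(γ t).1 - (γ 0).1| := abs_abs_sub_abs_le_abs_sub _ _
        _ ≤ t := (hγ.mono ht.2.le).abs_fst_sub_le ht.1.le
        _ ≤ r := (ht.2.trans hTr).le
  refine ⟨(hγ.abs_fst_sub_le hT.le).trans hTr.le, (hγ.abs_snd_fst_sub_le hT.le).trans hTr.le,
    (hγ.abs_sheared_height_le hT.le oscillation).trans ?_⟩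
  gcongr

lemma shearedBox_subset_ccBall {τ : ℝ} (hα : 0 < α) (hτ : 0 < τ) (hτr : 8 * τ < r)
    (p : ℝ × ℝ × ℝ) :
    shearedBox p (|p.1| ^ α) τ (((|p.1| + τ) ^ α - |p.1| ^ α) * τ) ⊆ ccBall α p r := by
  rintro q ⟨hx, hy, hz⟩
  obtain ⟨x₁, hx₁, hx₁p⟩ := exists_abs_eq_abs_add p.1 hτ.le
  have gap_pos : 0 < |x₁| ^ α - |p.1| ^ α :=
    sub_pos.2 (Real.rpow_lt_rpow (abs_nonneg _) (by linarith) hα)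
  rw [← hx₁] at hz
  obtain ⟨v, hv⟩ : ∃ v, q.2.2 - p.2.2 - |p.1| ^ α * (q.2.1 - p.2.1) =
      (|x₁| ^ α - |p.1| ^ α) * v := ⟨_, (mul_div_cancel₀ _ gap_pos.ne').symm⟩
  have hvτ : |v| ≤ τ := by
    rw [hv, abs_mul, abs_of_pos gap_pos] at hz
    exact le_of_mul_le_mul_left hz gap_pos
  have hqx₁ : |q.1 - x₁| ≤ 2 * τ := by
    linarith [abs_sub_le q.1 p.1 x₁, abs_sub_comm x₁ p.1]
  have hu : |q.2.1 - p.2.1 - v| ≤ 2 * τ := by linarith [abs_sub (q.2.1 - p.2.1) v]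
  exact (IsReachable.of_two_rails (T := 2 * τ) (by linarith) (by linarith) hqx₁ hu (by linarith)
    hv).mem_ccBall (by linarith)

lemma volume_ccBall_le (hα : 0 < α) (hr : 0 < r) (p : ℝ × ℝ × ℝ) :
    volume (ccBall α p r) ≤
      ENNReal.ofReal (16 * max α 1 * (r ^ 4 * (|p.1| + r) ^ (α - 1))) := by
  refine (measure_mono (ccBall_subset_shearedBox hα p)).trans_eq ?_
  rw [volume_shearedBox p _ _ hr.le]
  congr 1
  ring

lemma le_volume_ccBall (hα : 0 < α) (hr : 0 < r) (p : ℝ × ℝ × ℝ) :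
    ENNReal.ofReal (8 / 9 ^ 4 * min α 1 / 9 ^ |α - 1| * (r ^ 4 * (|p.1| + r) ^ (α - 1))) ≤
      volume (ccBall α p r) := by
  obtain ⟨τ, rfl⟩ : ∃ τ, r = 9 * τ := ⟨r / 9, by ring⟩
  have hτ : 0 < τ := by linarith
  have hx := abs_nonneg p.1
  have comparable : (|p.1| + 9 * τ) ^ (α - 1) ≤ 9 ^ |α - 1| * (|p.1| + τ) ^ (α - 1) :=
    rpow_le_rpow_abs_mul_rpow (by positivity) (by positivity) (by linarith) (by linarith)
  have gap : min α 1 * (τ * (|p.1| + τ) ^ (α - 1)) ≤ (|p.1| + τ) ^ α - |p.1| ^ α := by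
    simpa using min_mul_sub_mul_rpow_le_rpow_sub_rpow hα.le (a := |p.1| + τ) (by positivity) hx
      (by linarith)
  refine le_trans (ENNReal.ofReal_le_ofReal ?_) ((volume_shearedBox p _ _ hτ.le).symm.trans_le
    (measure_mono (shearedBox_subset_ccBall hα hτ (by linarith) p)))
  calc 8 / 9 ^ 4 * min α 1 / 9 ^ |α - 1| * ((9 * τ) ^ 4 * (|p.1| + 9 * τ) ^ (α - 1))
      ≤ 8 / 9 ^ 4 * min α 1 / 9 ^ |α - 1| *
          ((9 * τ) ^ 4 * (9 ^ |α - 1| * (|p.1| + τ) ^ (α - 1))) := by gcongr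
    _ = 8 * τ ^ 2 * (min α 1 * (τ * (|p.1| + τ) ^ (α - 1)) * τ) := by field_simp
    _ ≤ 8 * τ ^ 2 * (((|p.1| + τ) ^ α - |p.1| ^ α) * τ) := by gcongr

lemma exists_volume_ccBall_comparable {K : ℝ} (hα : 0 < α) (hK : 0 < K) :
    ∃ c C : ℝ, 0 < c ∧ 0 < C ∧ ∀ (p : ℝ × ℝ × ℝ) (r m : ℝ), 0 < r → 0 < m →
      m ≤ K * (|p.1| + r) → |p.1| + r ≤ K * m →
        ENNReal.ofReal (c * r ^ 4 * m ^ (α - 1)) ≤ volume (ccBall α p r) ∧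
        volume (ccBall α p r) ≤ ENNReal.ofReal (C * r ^ 4 * m ^ (α - 1)) := by
  refine ⟨8 / 9 ^ 4 * min α 1 / 9 ^ |α - 1| / K ^ |α - 1|, 16 * max α 1 * K ^ |α - 1|,
    by positivity, by positivity, fun p r m hr hm hmK hKm => ⟨?_, ?_⟩⟩
  · refine le_trans (ENNReal.ofReal_le_ofReal ?_) (le_volume_ccBall hα hr p)
    calc 8 / 9 ^ 4 * min α 1 / 9 ^ |α - 1| / K ^ |α - 1| * r ^ 4 * m ^ (α - 1)
        ≤ 8 / 9 ^ 4 * min α 1 / 9 ^ |α - 1| / K ^ |α - 1| * r ^ 4 *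
            (K ^ |α - 1| * (|p.1| + r) ^ (α - 1)) := by
          gcongr
          exact rpow_le_rpow_abs_mul_rpow hm (by positivity) hmK hKm
      _ = 8 / 9 ^ 4 * min α 1 / 9 ^ |α - 1| * (r ^ 4 * (|p.1| + r) ^ (α - 1)) := by field_simp
  · refine (volume_ccBall_le hα hr p).trans (ENNReal.ofReal_le_ofReal ?_)
    calc 16 * max α 1 * (r ^ 4 * (|p.1| + r) ^ (α - 1))
        ≤ 16 * max α 1 * (r ^ 4 * (K ^ |α - 1| * m ^ (α - 1))) := by
          gcongr
          exact rpow_le_rpow_abs_mul_rpow (by positivity) hm hKm hmK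
      _ = 16 * max α 1 * K ^ |α - 1| * r ^ 4 * m ^ (α - 1) := by ring

end BallBox

theorem volume_ccBall_general (α : ℝ) (hα : 0 < α) :
    ∀ η : ℝ, 0 < η → ∃ c C : ℝ, 0 < c ∧ 0 < C ∧
      ∀ p : ℝ × ℝ × ℝ, ∀ r : ℝ, 0 < r →
        (η * r ≤ |p.1| →
          ENNReal.ofReal (c * r ^ 4 * |p.1| ^ (α - 1)) ≤ volume (ccBall α p r) ∧
          volume (ccBall α p r) ≤ ENNReal.ofReal (C * r ^ 4 * |p.1| ^ (α - 1))) ∧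
        (|p.1| ≤ η * r →
          ENNReal.ofReal (c * r ^ (α + 3)) ≤ volume (ccBall α p r) ∧
          volume (ccBall α p r) ≤ ENNReal.ofReal (C * r ^ (α + 3))) := by
  intro η hη
  have hη' : 0 < 1 / η := one_div_pos.2 hη
  have one_le_K : 1 ≤ 1 + η + 1 / η := by linarith
  obtain ⟨c, C, hc, hC, key⟩ := exists_volume_ccBall_comparable hα (zero_lt_one.trans_le one_le_K)
  refine ⟨c, C, hc, hC, fun p r hr => ⟨fun hp => ?_, fun hp => ?_⟩⟩
  · have hx : 0 < |p.1| := (mul_pos hη hr).trans_le hp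
    have hrx : r ≤ 1 / η * |p.1| := by rwa [one_div, le_inv_mul_iff₀ hη]
    have le_mul_sum : |p.1| ≤ (1 + η + 1 / η) * (|p.1| + r) := by
      linarith [le_mul_of_one_le_left (add_pos hx hr).le one_le_K]
    exact key p r |p.1| hr hx le_mul_sum (by linarith [mul_pos hη hx])
  · have hx := abs_nonneg p.1
    have le_mul_sum : r ≤ (1 + η + 1 / η) * (|p.1| + r) := by
      linarith [le_mul_of_one_le_left (add_pos_of_nonneg_of_pos hx hr).le one_le_K]
    have rpow_eq : r ^ (α + 3) = r ^ 4 * r ^ (α - 1) := by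
      rw [← Real.rpow_natCast, ← Real.rpow_add hr]
      norm_num
      ring_nf
    simp only [rpow_eq, ← mul_assoc]
    exact key p r r hr hr le_mul_sum (by linarith [mul_pos hη' hr])

/-- Volume estimates for CC balls: `ℒ³(B(p,r)) ≃ r⁴ |x|^{α-1}` when `|x| ≥ η r`, and
`ℒ³(B(p,r)) ≃ r^{α+3}` when `|x| ≤ η r`. -/
theorem volume_ccBall (α : ℝ) (hα : 1 ≤ α) :
    ∀ η : ℝ, 0 < η → ∃ c C : ℝ, 0 < c ∧ 0 < C ∧
      ∀ p : ℝ × ℝ × ℝ, ∀ r : ℝ, 0 < r →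
        (η * r ≤ |p.1| →
          ENNReal.ofReal (c * r ^ 4 * |p.1| ^ (α - 1)) ≤ volume (ccBall α p r) ∧
          volume (ccBall α p r) ≤ ENNReal.ofReal (C * r ^ 4 * |p.1| ^ (α - 1))) ∧
        (|p.1| ≤ η * r →
          ENNReal.ofReal (c * r ^ (α + 3)) ≤ volume (ccBall α p r) ∧
          volume (ccBall α p r) ≤ ENNReal.ofReal (C * r ^ (α + 3))) :=
  volume_ccBall_general α (by linarith)
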